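/- Let $n \ge 3$. There exists a constant $C = C(n) > 1$ such that for all $y \in \mathbb{R}^n$, $$\frac{\max(1,\log|y|)}{C(1+|y|)^{n-2}} \le \int_{\mathbb{R}^n}\frac{dz}{|y-z|^{n-2}(1+|z|)^{n}} \le \frac{C\max(1,\log|y|)}{(1+|y|)^{n-2}}.$$ -/

import Mathlib

open Real MeasureTheory

open Set Metric Module

/-! Let `d = dim E`, let `0 < s < d` be the exponent of the singular factor `‖y - z‖ ^ (-s)`, and
put `L = 1 + ‖y‖`. Where `‖y - z‖ ≤ L / 2` the weight `(1 + ‖z‖) ^ (-d)` is `O(L ^ (-d))` and the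
integral of `‖x‖ ^ (-s)` over a ball of radius `L / 2` is `O(L ^ (d - s))`. Where `‖z‖ > L` and
`‖y - z‖ > L / 2` the two factors together are `O(‖z‖ ^ (-s - d))`, whose integral is
`O(L ^ (-s))`. On the rest of the ball `‖z‖ ≤ L` the singular factor is `O(L ^ (-s))`, and in polar
coordinates the weight integrates like `dr / r` up to `r = L`: this is the logarithm. Conversely,
on a ball of radius comparable to `L` the singular factor is at least a multiple of `L ^ (-s)`, so
the same logarithm appears as a lower bound. -/

section OneDimensional

variable {R : ℝ}

lemma max_one_log_le_one_add_log_one_add (hR : 0 ≤ R) : max 1 (log R) ≤ 1 + log (1 + R) := by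
  have hlog : 0 ≤ log (1 + R) := log_nonneg (by linarith)
  refine max_le (by linarith) ?_
  rcases hR.eq_or_lt with rfl | hpos
  · simp
  · linarith [log_le_log hpos (by linarith : R ≤ 1 + R)]

lemma log_one_add_le_one_add_log (hR : 1 ≤ R) : log (1 + R) ≤ 1 + log R := by
  calc log (1 + R) ≤ log (2 * R) := log_le_log (by linarith) (by linarith)
    _ = log 2 + log R := log_mul two_ne_zero (by linarith)
    _ ≤ 1 + log R := by linarith [log_two_lt_d9]

lemma one_add_log_one_add_le_three_mul_max (hR : 0 ≤ R) :
    1 + log (1 + R) ≤ 3 * max 1 (log R) := by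
  have hone := le_max_left 1 (log R)
  have hlog := le_max_right 1 (log R)
  rcases le_total R 1 with hR1 | hR1
  · linarith [log_le_sub_one_of_pos (by linarith : 0 < 1 + R)]
  · linarith [log_one_add_le_one_add_log hR1]

lemma setIntegral_Ioc_one_add_rpow_neg_one (hR : 0 ≤ R) :
    ∫ r in Ioc 0 R, (1 + r) ^ (-1 : ℝ) = log (1 + R) := by
  simp only [rpow_neg_one]
  rw [← intervalIntegral.integral_of_le hR,
    intervalIntegral.integral_comp_add_left (fun r => r⁻¹) (1 : ℝ),
    integral_inv_of_pos (by norm_num) (by linarith)]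
  simp

lemma setIntegral_Ioc_one_rpow_neg_one (hR : 1 ≤ R) :
    ∫ r in Ioc 1 R, r ^ (-1 : ℝ) = log R := by
  simp only [rpow_neg_one]
  rw [← intervalIntegral.integral_of_le hR, integral_inv_of_pos one_pos (by linarith), div_one]

lemma pow_sub_one_mul_rpow {d : ℕ} (hd : d ≠ 0) (hR : 0 < R) (p : ℝ) :
    R ^ (d - 1) * R ^ p = R ^ (d + p - 1) := by
  rw [← rpow_natCast, ← rpow_add hR, Nat.cast_pred (Nat.pos_of_ne_zero hd)]
  ring_nf

lemma integrableOn_Ioc_pow_mul_one_add_rpow (k : ℕ) (p R : ℝ) :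
    IntegrableOn (fun r : ℝ => r ^ k * (1 + r) ^ p) (Ioc 0 R) := by
  refine (ContinuousOn.integrableOn_Icc ?_).mono_set Ioc_subset_Icc_self
  refine ContinuousOn.mul (by fun_prop) (ContinuousOn.rpow_const (by fun_prop) fun r hr => ?_)
  exact Or.inl (by linarith [hr.1])

lemma setIntegral_Ioc_pow_mul_one_add_rpow_neg_le_log {d : ℕ} (hd : d ≠ 0) (hR : 0 ≤ R) :
    ∫ r in Ioc 0 R, r ^ (d - 1) * (1 + r) ^ (-d : ℝ) ≤ log (1 + R) := by
  rw [← setIntegral_Ioc_one_add_rpow_neg_one hR]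
  refine setIntegral_mono_on (integrableOn_Ioc_pow_mul_one_add_rpow _ _ R)
    (by simpa using integrableOn_Ioc_pow_mul_one_add_rpow 0 (-1) R) measurableSet_Ioc
    fun r ⟨hr, _⟩ => ?_
  calc r ^ (d - 1) * (1 + r) ^ (-d : ℝ) ≤ (1 + r) ^ (d - 1) * (1 + r) ^ (-d : ℝ) := by
        gcongr
        linarith
    _ = (1 + r) ^ (-1 : ℝ) := by
        rw [pow_sub_one_mul_rpow hd (by positivity), add_neg_cancel, zero_sub]

lemma two_rpow_neg_mul_rpow_neg_one_le {d : ℕ} (hd : d ≠ 0) (hR : 1 ≤ R) :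
    2 ^ (-d : ℝ) * R ^ (-1 : ℝ) ≤ R ^ (d - 1) * (1 + R) ^ (-d : ℝ) := by
  have hpos : 0 < R := by linarith
  calc 2 ^ (-d : ℝ) * R ^ (-1 : ℝ) = 2 ^ (-d : ℝ) * (R ^ (d - 1) * R ^ (-d : ℝ)) := by
        rw [pow_sub_one_mul_rpow hd hpos, add_neg_cancel, zero_sub]
    _ = R ^ (d - 1) * (2 * R) ^ (-d : ℝ) := by
        rw [mul_rpow two_pos.le hpos.le]
        ring
    _ ≤ R ^ (d - 1) * (1 + R) ^ (-d : ℝ) := by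
        gcongr ?_ * ?_
        exact rpow_le_rpow_of_nonpos (by linarith) (by linarith) (by simp)

lemma two_rpow_neg_mul_log_le_setIntegral_Ioc_pow_mul_one_add_rpow_neg {d : ℕ} (hd : d ≠ 0)
    (hR : 1 ≤ R) :
    2 ^ (-d : ℝ) * log R ≤ ∫ r in Ioc 0 R, r ^ (d - 1) * (1 + r) ^ (-d : ℝ) := by
  have hint := integrableOn_Ioc_pow_mul_one_add_rpow (d - 1) (-d) R
  have hsub : Ioc 1 R ⊆ Ioc 0 R := Ioc_subset_Ioc_left zero_le_one
  have hinv : IntegrableOn (fun r : ℝ => r ^ (-1 : ℝ)) (Ioc 1 R) := by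
    refine (ContinuousOn.integrableOn_Icc ?_).mono_set Ioc_subset_Icc_self
    exact continuousOn_id.rpow_const fun r hr => Or.inl (zero_lt_one.trans_le hr.1).ne'
  calc 2 ^ (-d : ℝ) * log R = ∫ r in Ioc 1 R, 2 ^ (-d : ℝ) * r ^ (-1 : ℝ) := by
        rw [integral_const_mul, setIntegral_Ioc_one_rpow_neg_one hR]
    _ ≤ ∫ r in Ioc 1 R, r ^ (d - 1) * (1 + r) ^ (-d : ℝ) :=
        setIntegral_mono_on (hinv.const_mul _) (hint.mono_set hsub) measurableSet_Ioc
          fun r hr => two_rpow_neg_mul_rpow_neg_one_le hd hr.1.le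
    _ ≤ ∫ r in Ioc 0 R, r ^ (d - 1) * (1 + r) ^ (-d : ℝ) := by
        refine setIntegral_mono_set hint ?_ hsub.eventuallyLE
        filter_upwards [ae_restrict_mem measurableSet_Ioc] with r ⟨hr, _⟩
        positivity

end OneDimensional

section Polar

lemma closedBall_zero_eq_norm_preimage_Iic {E : Type*} [SeminormedAddCommGroup E] (R : ℝ) :
    closedBall (0 : E) R = norm ⁻¹' Iic R := by
  ext
  simp

lemma indicator_norm_preimage_fun_norm {E F : Type*} [Norm E] [Zero F] (S : Set ℝ) (f : ℝ → F) :
    (norm ⁻¹' S).indicator (fun x : E => f ‖x‖) = fun x => S.indicator f ‖x‖ :=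
  funext fun _ => indicator_comp_right (g := f) norm

lemma integrableOn_closedBall_one_add_norm_rpow {E : Type*} [NormedAddCommGroup E] [ProperSpace E]
    [MeasurableSpace E] [OpensMeasurableSpace E] (μ : Measure E) [IsFiniteMeasureOnCompacts μ]
    (p R : ℝ) :
    IntegrableOn (fun x : E => (1 + ‖x‖) ^ p) (closedBall 0 R) μ := by
  refine ContinuousOn.integrableOn_compact (isCompact_closedBall 0 R) ?_
  exact ContinuousOn.rpow_const (by fun_prop) fun x _ => Or.inl (by positivity)

variable {E : Type*} [NormedAddCommGroup E] [NormedSpace ℝ E] [FiniteDimensional ℝ E]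
  [Nontrivial E] [MeasurableSpace E] [BorelSpace E] (μ : Measure E) [μ.IsAddHaarMeasure]

lemma toSphere_real_univ_pos : 0 < μ.toSphere.real univ :=
  haveI : NeZero μ.toSphere := ⟨μ.toSphere_ne_zero⟩
  measureReal_univ_pos

section NormPreimage

variable {F : Type*} [NormedAddCommGroup F] [NormedSpace ℝ F] {S : Set ℝ}

lemma integrableOn_norm_preimage_iff (hS : MeasurableSet S) {f : ℝ → F} :
    IntegrableOn (fun x : E => f ‖x‖) (norm ⁻¹' S) μ ↔
      IntegrableOn (fun r => r ^ (finrank ℝ E - 1) • f r) (Ioi 0 ∩ S) := by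
  rw [← integrable_indicator_iff (measurable_norm hS), indicator_norm_preimage_fun_norm,
    integrable_fun_norm_addHaar μ]
  simp_rw [← indicator_smul_apply S (fun r : ℝ => r ^ (finrank ℝ E - 1))]
  exact (integrableOn_indicator_iff hS).trans (by rw [inter_comm])

lemma setIntegral_norm_preimage (hS : MeasurableSet S) (f : ℝ → F) :
    ∫ x in (norm ⁻¹' S : Set E), f ‖x‖ ∂μ =
      μ.toSphere.real univ • ∫ r in Ioi 0 ∩ S, r ^ (finrank ℝ E - 1) • f r := by
  rw [← integral_indicator (measurable_norm hS), indicator_norm_preimage_fun_norm,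
    integral_fun_norm_addHaar μ]
  simp_rw [← indicator_smul_apply S (fun r : ℝ => r ^ (finrank ℝ E - 1))]
  rw [setIntegral_indicator hS, ← Nat.cast_smul_eq_nsmul ℝ, smul_smul,
    Measure.toSphere_real_apply_univ]

end NormPreimage

variable {p R : ℝ}

lemma integrableOn_closedBall_norm_rpow (hp : 0 < finrank ℝ E + p) (hR : 0 ≤ R) :
    IntegrableOn (fun x : E => ‖x‖ ^ p) (closedBall 0 R) μ := by
  rw [closedBall_zero_eq_norm_preimage_Iic,
    integrableOn_norm_preimage_iff μ measurableSet_Iic (f := fun r => r ^ p), Ioi_inter_Iic]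
  refine IntegrableOn.congr_fun ?_
    (fun r hr => (pow_sub_one_mul_rpow finrank_pos.ne' hr.1 p).symm) measurableSet_Ioc
  rw [← intervalIntegrable_iff_integrableOn_Ioc_of_le hR]
  exact intervalIntegral.intervalIntegrable_rpow' (by linarith)

lemma setIntegral_closedBall_norm_rpow (hp : 0 < finrank ℝ E + p) (hR : 0 ≤ R) :
    ∫ x in closedBall (0 : E) R, ‖x‖ ^ p ∂μ =
      μ.toSphere.real univ * (R ^ (finrank ℝ E + p) / (finrank ℝ E + p)) := by
  have hpow : EqOn (fun r : ℝ => r ^ (finrank ℝ E - 1) • r ^ p)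
      (fun r => r ^ (finrank ℝ E + p - 1)) (Ioc 0 R) := fun r hr =>
    pow_sub_one_mul_rpow finrank_pos.ne' hr.1 p
  rw [closedBall_zero_eq_norm_preimage_Iic,
    setIntegral_norm_preimage μ measurableSet_Iic (fun r => r ^ p), Ioi_inter_Iic,
    setIntegral_congr_fun measurableSet_Ioc hpow, smul_eq_mul,
    ← intervalIntegral.integral_of_le hR, integral_rpow (Or.inl (by linarith)), sub_add_cancel,
    zero_rpow hp.ne', sub_zero]

lemma integrableOn_compl_closedBall_norm_rpow (hp : finrank ℝ E + p < 0) (hR : 0 < R) :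
    IntegrableOn (fun x : E => ‖x‖ ^ p) (closedBall 0 R)ᶜ μ := by
  rw [closedBall_zero_eq_norm_preimage_Iic, ← preimage_compl, compl_Iic,
    integrableOn_norm_preimage_iff μ measurableSet_Ioi (f := fun r => r ^ p), Ioi_inter_Ioi,
    sup_eq_right.2 hR.le]
  exact (integrableOn_Ioi_rpow_of_lt (by linarith) hR).congr_fun
    (fun r hr => (pow_sub_one_mul_rpow finrank_pos.ne' (hR.trans hr) p).symm) measurableSet_Ioi

lemma setIntegral_compl_closedBall_norm_rpow (hp : finrank ℝ E + p < 0) (hR : 0 < R) :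
    ∫ x in (closedBall (0 : E) R)ᶜ, ‖x‖ ^ p ∂μ =
      μ.toSphere.real univ * (-R ^ (finrank ℝ E + p) / (finrank ℝ E + p)) := by
  have hpow : EqOn (fun r : ℝ => r ^ (finrank ℝ E - 1) • r ^ p)
      (fun r => r ^ (finrank ℝ E + p - 1)) (Ioi R) := fun r hr =>
    pow_sub_one_mul_rpow finrank_pos.ne' (hR.trans hr) p
  rw [closedBall_zero_eq_norm_preimage_Iic, ← preimage_compl, compl_Iic,
    setIntegral_norm_preimage μ measurableSet_Ioi (fun r => r ^ p), Ioi_inter_Ioi,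
    sup_eq_right.2 hR.le, setIntegral_congr_fun measurableSet_Ioi hpow, smul_eq_mul,
    integral_Ioi_rpow_of_lt (by linarith) hR, sub_add_cancel]

lemma setIntegral_closedBall_one_add_norm_rpow (p R : ℝ) :
    ∫ x in closedBall (0 : E) R, (1 + ‖x‖) ^ p ∂μ =
      μ.toSphere.real univ * ∫ r in Ioc 0 R, r ^ (finrank ℝ E - 1) * (1 + r) ^ p := by
  rw [closedBall_zero_eq_norm_preimage_Iic,
    setIntegral_norm_preimage μ measurableSet_Iic (fun r => (1 + r) ^ p), Ioi_inter_Iic]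
  simp only [smul_eq_mul]

end Polar

section Riesz

/-- The integrand `‖y - z‖ ^ (-s) * (1 + ‖z‖) ^ (-t)`, as a function of `z`, of the convolution
at `y` of the Riesz kernel of exponent `s` with a weight of decay `t`. At `z = y` it is `0` when
`s ≠ 0`, because `1 / 0 = 0`. -/
noncomputable def rieszIntegrand {E : Type*} [SeminormedAddCommGroup E] (s t : ℝ) (y z : E) : ℝ :=
  1 / (‖y - z‖ ^ s * (1 + ‖z‖) ^ t)

/-- Bound for `rieszIntegrand s t y z` at `x = y - z` when `‖y - z‖ ≤ L / 2`, where `L` stands for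
`1 + ‖y‖`: there `1 + ‖z‖ ≥ L / 2`. -/
noncomputable def nearMajorant {E : Type*} [SeminormedAddCommGroup E] (s t L : ℝ) : E → ℝ :=
  (closedBall 0 (L / 2)).indicator fun x => (L / 2) ^ (-t) * ‖x‖ ^ (-s)

/-- Bound for `rieszIntegrand s t y` on `‖z‖ ≤ L` away from the singularity, where `L` stands for
`1 + ‖y‖`: there `‖y - z‖ ≥ L / 2`. -/
noncomputable def midMajorant {E : Type*} [SeminormedAddCommGroup E] (s t L : ℝ) : E → ℝ :=
  (closedBall 0 L).indicator fun z => (L / 2) ^ (-s) * (1 + ‖z‖) ^ (-t)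

/-- Bound for `rieszIntegrand s t y` on `‖z‖ > L` away from the singularity, where `L` stands for
`1 + ‖y‖`: there `‖y - z‖ ≥ ‖z‖ / 3`. -/
noncomputable def farMajorant {E : Type*} [SeminormedAddCommGroup E] (s t L : ℝ) : E → ℝ :=
  (closedBall 0 L)ᶜ.indicator fun z => 3 ^ s * ‖z‖ ^ (-s - t)

/-- An upper bound for `rieszIntegrand s t y` whose integral splits into radial ones. -/
noncomputable def rieszMajorant {E : Type*} [SeminormedAddCommGroup E] (s t : ℝ) (y z : E) : ℝ :=
  nearMajorant s t (1 + ‖y‖) (y - z) + midMajorant s t (1 + ‖y‖) z + farMajorant s t (1 + ‖y‖) z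

section Pointwise

variable {E : Type*} [SeminormedAddCommGroup E] {s t : ℝ} {y z : E}

lemma rieszIntegrand_eq_rpow_neg_mul (s t : ℝ) (y z : E) :
    rieszIntegrand s t y z = ‖y - z‖ ^ (-s) * (1 + ‖z‖) ^ (-t) := by
  rw [rieszIntegrand, rpow_neg (norm_nonneg _), rpow_neg (by positivity), one_div, mul_inv]

lemma rieszIntegrand_nonneg (s t : ℝ) (y z : E) : 0 ≤ rieszIntegrand s t y z := by
  rw [rieszIntegrand]
  positivity

lemma rieszIntegrand_le_of_norm_sub_le (ht : 0 ≤ t) (hz : ‖y - z‖ ≤ (1 + ‖y‖) / 2) :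
    rieszIntegrand s t y z ≤ ((1 + ‖y‖) / 2) ^ (-t) * ‖y - z‖ ^ (-s) := by
  have hle : (1 + ‖y‖) / 2 ≤ 1 + ‖z‖ := by linarith [norm_sub_norm_le y z]
  rw [rieszIntegrand_eq_rpow_neg_mul, mul_comm]
  gcongr ?_ * _
  exact rpow_le_rpow_of_nonpos (by positivity) hle (neg_nonpos.2 ht)

lemma rieszIntegrand_le_of_le_norm_sub (hs : 0 ≤ s) (hz : (1 + ‖y‖) / 2 ≤ ‖y - z‖) :
    rieszIntegrand s t y z ≤ ((1 + ‖y‖) / 2) ^ (-s) * (1 + ‖z‖) ^ (-t) := by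
  rw [rieszIntegrand_eq_rpow_neg_mul]
  gcongr ?_ * _
  exact rpow_le_rpow_of_nonpos (by positivity) hz (neg_nonpos.2 hs)

lemma rieszIntegrand_le_of_norm_le_three_mul (hs : 0 ≤ s) (ht : 0 ≤ t) (hz : 0 < ‖z‖)
    (hzy : ‖z‖ ≤ 3 * ‖y - z‖) :
    rieszIntegrand s t y z ≤ 3 ^ s * ‖z‖ ^ (-s - t) := by
  calc rieszIntegrand s t y z = ‖y - z‖ ^ (-s) * (1 + ‖z‖) ^ (-t) :=
        rieszIntegrand_eq_rpow_neg_mul s t y z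
    _ ≤ (‖z‖ / 3) ^ (-s) * ‖z‖ ^ (-t) := by
        gcongr ?_ * ?_
        · exact rpow_le_rpow_of_nonpos (by positivity) (by linarith) (neg_nonpos.2 hs)
        · exact rpow_le_rpow_of_nonpos hz (by linarith) (neg_nonpos.2 ht)
    _ = 3 ^ s * ‖z‖ ^ (-s - t) := by
        rw [sub_eq_add_neg, rpow_add hz, div_rpow hz.le zero_le_three, rpow_neg zero_le_three]
        field_simp

lemma rpow_neg_mul_le_rieszIntegrand (hs : 0 ≤ s) {r : ℝ} (hz : 0 < ‖y - z‖)
    (hzr : ‖y - z‖ ≤ r) : r ^ (-s) * (1 + ‖z‖) ^ (-t) ≤ rieszIntegrand s t y z := by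
  rw [rieszIntegrand_eq_rpow_neg_mul]
  gcongr ?_ * _
  exact rpow_le_rpow_of_nonpos hz hzr (neg_nonpos.2 hs)

lemma nearMajorant_nonneg (s t : ℝ) {L : ℝ} (hL : 0 ≤ L) (z : E) : 0 ≤ nearMajorant s t L z :=
  indicator_nonneg (fun _ _ => by positivity) z

lemma midMajorant_nonneg (s t : ℝ) {L : ℝ} (hL : 0 ≤ L) (z : E) : 0 ≤ midMajorant s t L z :=
  indicator_nonneg (fun _ _ => by positivity) z

lemma farMajorant_nonneg (s t L : ℝ) (z : E) : 0 ≤ farMajorant s t L z :=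
  indicator_nonneg (fun _ _ => by positivity) z

lemma rieszIntegrand_le_rieszMajorant (hs : 0 ≤ s) (ht : 0 ≤ t) (y z : E) :
    rieszIntegrand s t y z ≤ rieszMajorant s t y z := by
  have hL : 0 ≤ 1 + ‖y‖ := by positivity
  have hnear := nearMajorant_nonneg s t hL (y - z)
  have hmid := midMajorant_nonneg s t hL z
  have hfar := farMajorant_nonneg s t (1 + ‖y‖) z
  rw [rieszMajorant]
  rcases le_or_gt ‖y - z‖ ((1 + ‖y‖) / 2) with hyz | hyz
  · have hmem : y - z ∈ closedBall 0 ((1 + ‖y‖) / 2) := by simpa using hyz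
    rw [nearMajorant, indicator_of_mem hmem]
    linarith [rieszIntegrand_le_of_norm_sub_le (s := s) ht hyz]
  rcases le_or_gt ‖z‖ (1 + ‖y‖) with hz | hz
  · have hmem : z ∈ closedBall 0 (1 + ‖y‖) := by simpa using hz
    rw [midMajorant, indicator_of_mem hmem]
    linarith [rieszIntegrand_le_of_le_norm_sub (t := t) hs hyz.le]
  · have hmem : z ∈ (closedBall 0 (1 + ‖y‖))ᶜ := by simpa using hz
    have hzy : ‖z‖ ≤ 3 * ‖y - z‖ := by linarith [norm_le_norm_add_norm_sub y z]
    rw [farMajorant, indicator_of_mem hmem]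
    linarith [rieszIntegrand_le_of_norm_le_three_mul hs ht (by linarith) hzy]

end Pointwise

variable {E : Type*} [NormedAddCommGroup E] [NormedSpace ℝ E] [FiniteDimensional ℝ E]
  [MeasurableSpace E] [BorelSpace E] (μ : Measure E) [μ.IsAddHaarMeasure] {s t L : ℝ}

lemma integrable_midMajorant (s t L : ℝ) : Integrable (midMajorant s t L : E → ℝ) μ :=
  IntegrableOn.integrable_indicator
    ((integrableOn_closedBall_one_add_norm_rpow μ (-t) L).const_mul _) measurableSet_closedBall

variable [Nontrivial E]

lemma integrable_nearMajorant (hs : s < finrank ℝ E) (hL : 0 ≤ L) :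
    Integrable (nearMajorant s t L : E → ℝ) μ :=
  IntegrableOn.integrable_indicator
    ((integrableOn_closedBall_norm_rpow μ (p := -s) (by linarith) (by linarith)).const_mul _)
    measurableSet_closedBall

lemma integrable_farMajorant (hst : finrank ℝ E < s + t) (hL : 0 < L) :
    Integrable (farMajorant s t L : E → ℝ) μ :=
  IntegrableOn.integrable_indicator
    ((integrableOn_compl_closedBall_norm_rpow μ (p := -s - t) (by linarith) hL).const_mul _)
    measurableSet_closedBall.compl

lemma integral_nearMajorant (hs : s < finrank ℝ E) (hL : 0 < L) :
    ∫ x : E, nearMajorant s t L x ∂μ =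
      μ.toSphere.real univ * ((L / 2) ^ (finrank ℝ E - s - t) / (finrank ℝ E - s)) := by
  simp only [nearMajorant]
  rw [integral_indicator measurableSet_closedBall, integral_const_mul,
    setIntegral_closedBall_norm_rpow μ (by linarith) (by linarith), ← sub_eq_add_neg,
    sub_eq_add_neg (_ - s), rpow_add (by linarith)]
  ring

lemma integral_midMajorant_finrank_le (hL : 0 ≤ L) :
    ∫ z : E, midMajorant s (finrank ℝ E) L z ∂μ ≤
      μ.toSphere.real univ * ((L / 2) ^ (-s) * log (1 + L)) := by
  simp only [midMajorant]
  rw [integral_indicator measurableSet_closedBall, integral_const_mul,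
    setIntegral_closedBall_one_add_norm_rpow, mul_left_comm]
  gcongr
  exact setIntegral_Ioc_pow_mul_one_add_rpow_neg_le_log finrank_pos.ne' hL

lemma integral_farMajorant (hst : finrank ℝ E < s + t) (hL : 0 < L) :
    ∫ z : E, farMajorant s t L z ∂μ =
      μ.toSphere.real univ * (3 ^ s * (L ^ (finrank ℝ E - s - t) / (s + t - finrank ℝ E))) := by
  simp only [farMajorant]
  rw [integral_indicator measurableSet_closedBall.compl, integral_const_mul,
    setIntegral_compl_closedBall_norm_rpow μ (by linarith) hL, mul_left_comm, ← add_sub_assoc,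
    ← sub_eq_add_neg, neg_div, ← div_neg]
  ring_nf

lemma integrable_rieszMajorant (hs : s < finrank ℝ E) (hst : finrank ℝ E < s + t) (y : E) :
    Integrable (rieszMajorant s t y) μ :=
  (((integrable_nearMajorant μ hs (by positivity)).comp_sub_left y).add
    (integrable_midMajorant μ s t _)).add (integrable_farMajorant μ hst (by positivity))

lemma integral_rieszMajorant (hs : s < finrank ℝ E) (hst : finrank ℝ E < s + t) (y : E) :
    ∫ z, rieszMajorant s t y z ∂μ =
      ∫ x : E, nearMajorant s t (1 + ‖y‖) x ∂μ + ∫ z : E, midMajorant s t (1 + ‖y‖) z ∂μ +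
        ∫ z : E, farMajorant s t (1 + ‖y‖) z ∂μ := by
  have hL : 0 < 1 + ‖y‖ := by positivity
  have hnear := (integrable_nearMajorant μ (t := t) hs hL.le).comp_sub_left y
  have hmid := integrable_midMajorant μ s t (1 + ‖y‖)
  rw [← integral_sub_left_eq_self (nearMajorant s t (1 + ‖y‖)) μ y, ← integral_add hnear hmid]
  exact integral_add (hnear.add hmid) (integrable_farMajorant μ hst hL)

lemma integral_rieszMajorant_finrank_le (hs : 0 < s) (hsd : s < finrank ℝ E) (y : E) :
    ∫ z, rieszMajorant s (finrank ℝ E) y z ∂μ ≤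
      μ.toSphere.real univ * (2 ^ s / (finrank ℝ E - s) + 2 ^ s + 3 ^ s / s) *
        (1 + log (1 + ‖y‖)) / (1 + ‖y‖) ^ s := by
  have hst : (finrank ℝ E : ℝ) < s + finrank ℝ E := by linarith
  have : 0 < finrank ℝ E - s := sub_pos.2 hsd
  rw [integral_rieszMajorant μ hsd hst, integral_nearMajorant μ hsd (by positivity),
    integral_farMajorant μ hst (by positivity), sub_sub_cancel_left, add_sub_cancel_right]
  have hL : 1 ≤ 1 + ‖y‖ := by linarith [norm_nonneg y]
  have hmid := integral_midMajorant_finrank_le μ (s := s) (zero_le_one.trans hL)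
  set L := 1 + ‖y‖
  have hlog : 0 ≤ log L := log_nonneg hL
  have hhalf : (L / 2) ^ (-s) = 2 ^ s / L ^ s := by
    rw [rpow_neg_eq_inv_rpow, inv_div, div_rpow (by norm_num) (by positivity)]
  rw [hhalf] at hmid ⊢
  calc _ ≤ μ.toSphere.real univ * (2 ^ s / L ^ s / (finrank ℝ E - s)) +
          μ.toSphere.real univ * (2 ^ s / L ^ s * (1 + log L)) +
          μ.toSphere.real univ * (3 ^ s * (L ^ (-s) / s)) := by
        grw [hmid, log_one_add_le_one_add_log hL]
    _ = μ.toSphere.real univ *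
          (2 ^ s / (finrank ℝ E - s) * 1 + 2 ^ s * (1 + log L) + 3 ^ s / s * 1) / L ^ s := by
        rw [rpow_neg (by positivity)]
        ring
    _ ≤ μ.toSphere.real univ * (2 ^ s / (finrank ℝ E - s) * (1 + log L) +
          2 ^ s * (1 + log L) + 3 ^ s / s * (1 + log L)) / L ^ s := by
        gcongr <;> linarith
    _ = _ := by ring

lemma integrable_rieszIntegrand (hs : 0 ≤ s) (hsd : s < finrank ℝ E) (hst : finrank ℝ E < s + t)
    (y : E) : Integrable (rieszIntegrand s t y) μ := by
  have hmeas : Measurable (rieszIntegrand s t y) := by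
    unfold rieszIntegrand
    fun_prop
  refine (integrable_rieszMajorant μ hsd hst y).mono' hmeas.aestronglyMeasurable
    (.of_forall fun z => ?_)
  rw [norm_of_nonneg (rieszIntegrand_nonneg s t y z)]
  exact rieszIntegrand_le_rieszMajorant hs (by linarith) y z

lemma integral_rieszIntegrand_finrank_le (hs : 0 < s) (hsd : s < finrank ℝ E) (y : E) :
    ∫ z, rieszIntegrand s (finrank ℝ E) y z ∂μ ≤
      μ.toSphere.real univ * (2 ^ s / (finrank ℝ E - s) + 2 ^ s + 3 ^ s / s) *
        (1 + log (1 + ‖y‖)) / (1 + ‖y‖) ^ s := by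
  have hst : (finrank ℝ E : ℝ) < s + finrank ℝ E := by linarith
  refine (integral_mono (integrable_rieszIntegrand μ hs.le hsd hst y)
    (integrable_rieszMajorant μ hsd hst y) fun z => ?_).trans
    (integral_rieszMajorant_finrank_le μ hs hsd y)
  exact rieszIntegrand_le_rieszMajorant hs.le (by positivity) y z

lemma le_integral_rieszIntegrand_finrank (hs : 0 < s) (hsd : s < finrank ℝ E) (y : E) :
    μ.toSphere.real univ * 2 ^ (-finrank ℝ E : ℝ) * 4 ^ (-s) *
        (1 + log (1 + ‖y‖)) / (1 + ‖y‖) ^ s ≤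
      ∫ z, rieszIntegrand s (finrank ℝ E) y z ∂μ := by
  set L := 1 + ‖y‖
  have hL1 : 1 ≤ L := by linarith [norm_nonneg y]
  have hint := integrable_rieszIntegrand μ hs.le hsd (by linarith : _ < s + finrank ℝ E) y
  -- The radius `exp 1 * L` makes the logarithm exactly `1 + log L`.
  have hlog : log (exp 1 * L) = 1 + log L := by
    rw [log_mul (exp_ne_zero 1) (by positivity), log_exp]
  calc _ = (4 * L) ^ (-s) * (μ.toSphere.real univ *
        (2 ^ (-finrank ℝ E : ℝ) * log (exp 1 * L))) := by
        rw [hlog, mul_rpow (by norm_num) (by positivity), rpow_neg (by positivity : 0 ≤ L)]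
        ring
    _ ≤ (4 * L) ^ (-s) *
        ∫ z in closedBall (0 : E) (exp 1 * L), (1 + ‖z‖) ^ (-finrank ℝ E : ℝ) ∂μ := by
        rw [setIntegral_closedBall_one_add_norm_rpow]
        gcongr
        exact two_rpow_neg_mul_log_le_setIntegral_Ioc_pow_mul_one_add_rpow_neg finrank_pos.ne'
          (one_le_mul_of_one_le_of_one_le (one_le_exp zero_le_one) hL1)
    _ = ∫ z in closedBall (0 : E) (exp 1 * L),
        (4 * L) ^ (-s) * (1 + ‖z‖) ^ (-finrank ℝ E : ℝ) ∂μ := (integral_const_mul _ _).symm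
    _ ≤ ∫ z in closedBall (0 : E) (exp 1 * L), rieszIntegrand s (finrank ℝ E) y z ∂μ := by
        refine setIntegral_mono_on_ae
          ((integrableOn_closedBall_one_add_norm_rpow μ _ _).const_mul _) hint.integrableOn
          measurableSet_closedBall ?_
        filter_upwards [Measure.ae_ne μ y] with z hzy hz
        refine rpow_neg_mul_le_rieszIntegrand hs.le (norm_pos_iff.2 (sub_ne_zero.2 hzy.symm)) ?_
        have hnorm : ‖z‖ ≤ exp 1 * L := by simpa using hz
        nlinarith [norm_sub_le y z, exp_one_lt_three]
    _ ≤ ∫ z, rieszIntegrand s (finrank ℝ E) y z ∂μ :=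
        setIntegral_le_integral hint (.of_forall (rieszIntegrand_nonneg s _ y))

end Riesz

theorem stmt_2_general {E : Type*} [NormedAddCommGroup E] [NormedSpace ℝ E]
    [FiniteDimensional ℝ E] [MeasurableSpace E] [BorelSpace E] (μ : Measure E)
    [μ.IsAddHaarMeasure] {s : ℝ} (hs : 0 < s) (hsd : s < finrank ℝ E) :
    ∃ C : ℝ, 1 < C ∧ ∀ y : E,
      max 1 (log ‖y‖) / (C * (1 + ‖y‖) ^ s) ≤
        (∫ z : E, 1 / (‖y - z‖ ^ s * (1 + ‖z‖) ^ (finrank ℝ E : ℝ)) ∂μ) ∧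
      (∫ z : E, 1 / (‖y - z‖ ^ s * (1 + ‖z‖) ^ (finrank ℝ E : ℝ)) ∂μ) ≤
        C * max 1 (log ‖y‖) / (1 + ‖y‖) ^ s := by
  have : Nontrivial E := nontrivial_of_finrank_pos (R := ℝ) (by exact_mod_cast hs.trans hsd)
  have : 0 < finrank ℝ E - s := sub_pos.2 hsd
  have hσ := toSphere_real_univ_pos μ
  set A := μ.toSphere.real univ * (2 ^ s / (finrank ℝ E - s) + 2 ^ s + 3 ^ s / s)
  set B := μ.toSphere.real univ * 2 ^ (-finrank ℝ E : ℝ) * 4 ^ (-s)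
  have hA0 : 0 < A := by positivity
  have hB0 : 0 < B := by positivity
  have hBinv : 0 < B⁻¹ := inv_pos.2 hB0
  refine ⟨1 + 3 * A + B⁻¹, by linarith, fun y => ⟨?_, ?_⟩⟩
  · calc max 1 (log ‖y‖) / ((1 + 3 * A + B⁻¹) * (1 + ‖y‖) ^ s)
        ≤ (1 + log (1 + ‖y‖)) / (B⁻¹ * (1 + ‖y‖) ^ s) := by
          gcongr
          · linarith [max_one_log_le_one_add_log_one_add (norm_nonneg y), le_max_left 1 (log ‖y‖)]
          · exact max_one_log_le_one_add_log_one_add (norm_nonneg y)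
          · linarith
      _ = B * (1 + log (1 + ‖y‖)) / (1 + ‖y‖) ^ s := by field_simp
      _ ≤ _ := le_integral_rieszIntegrand_finrank μ hs hsd y
  · calc _ ≤ A * (1 + log (1 + ‖y‖)) / (1 + ‖y‖) ^ s :=
          integral_rieszIntegrand_finrank_le μ hs hsd y
      _ ≤ A * (3 * max 1 (log ‖y‖)) / (1 + ‖y‖) ^ s := by
          gcongr
          exact one_add_log_one_add_le_three_mul_max (norm_nonneg y)
      _ ≤ (1 + 3 * A + B⁻¹) * max 1 (log ‖y‖) / (1 + ‖y‖) ^ s := by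
          rw [mul_left_comm, ← mul_assoc]
          gcongr
          linarith

theorem stmt_2 {n : ℕ} (hn : 3 ≤ n) :
    ∃ C : ℝ, 1 < C ∧ ∀ y : EuclideanSpace ℝ (Fin n),
      max 1 (Real.log ‖y‖) / (C * (1 + ‖y‖) ^ ((n : ℝ) - 2)) ≤
        (∫ z : EuclideanSpace ℝ (Fin n),
          1 / (‖y - z‖ ^ ((n : ℝ) - 2) * (1 + ‖z‖) ^ (n : ℝ))) ∧
      (∫ z : EuclideanSpace ℝ (Fin n),
          1 / (‖y - z‖ ^ ((n : ℝ) - 2) * (1 + ‖z‖) ^ (n : ℝ))) ≤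
        C * max 1 (Real.log ‖y‖) / (1 + ‖y‖) ^ ((n : ℝ) - 2) := by
  have hn' : (3 : ℝ) ≤ n := by exact_mod_cast hn
  simpa only [finrank_euclideanSpace_fin] using
    stmt_2_general (volume : Measure (EuclideanSpace ℝ (Fin n))) (s := n - 2) (by linarith)
      (by rw [finrank_euclideanSpace_fin]; linarith)
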